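/- arXiv:1702.02327 — 2 statements merged into one kernel-verified Lean document; each statement's English description precedes it below -/
import Mathlib

section
/- Let q = p^e with p prime, let 2 ≤ n < q with p ∤ n, let b ∈ F_q, and let 0 ≤ k ≤ n. The number of tuples (a_2,...,a_n) ∈ F_q^{n-1} such that f(x) = x^n - b x^{n-1} + a_2 x^{n-2} + ... + a_n has exactly k distinct roots in F_q equals q^{n-k-1} * C(q,k) * Σ_{i=0}^{n-k} (-1)^i C(q-k, i) q^{-i}. -/
/-!
Write `q = |F|`. A monic polynomial of degree `n` vanishing on `S` is `∏ s ∈ S, (X - s)` times a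
monic polynomial of degree `n - |S|`, so exactly `q ^ (n - |S|)` monic polynomials of degree `n`
vanish on `S` whenever `|S| ≤ n`. Summing over `S` gives the binomial moments of the number of
roots, and binomial inversion gives the number of monic polynomials of degree `n` with exactly `k`
roots. The substitution `x ↦ x + t` preserves the number of roots and adds `n * t` to the
coefficient of `x ^ (n - 1)`; as `n ≠ 0` in `F`, that coefficient is equidistributed among these
polynomials, and prescribing it divides the count by `q`.
-/

open Polynomial Finset

section Combinatorics

lemma sum_neg_one_pow_mul_choose_mul_choose {n k r : ℕ} (hr : r ≤ n) :
    ∑ i ∈ range (n - k + 1), (-1 : ℤ) ^ i * (k + i).choose k * r.choose (k + i)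
      = if r = k then 1 else 0 := by
  have trinomial (i : ℕ) : (-1 : ℤ) ^ i * (k + i).choose k * r.choose (k + i)
      = r.choose k * ((-1) ^ i * (r - k).choose i) := by
    have h := Nat.choose_mul (n := r) (Nat.le_add_right k i)
    rw [Nat.add_sub_cancel_left] at h
    zify at h
    linear_combination (-1 : ℤ) ^ i * h
  have truncate : ∑ i ∈ range (n - k + 1), (-1 : ℤ) ^ i * (r - k).choose i
      = ∑ i ∈ range (r - k + 1), (-1 : ℤ) ^ i * (r - k).choose i := by
    refine (sum_subset (range_subset_range.2 (by omega)) fun i _ hi ↦ ?_).symm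
    rw [Nat.choose_eq_zero_of_lt (by simpa using hi), Nat.cast_zero, mul_zero]
  simp_rw [trinomial]
  rw [← mul_sum, truncate, Int.alternating_sum_range_choose]
  rcases lt_trichotomy r k with h | rfl | h
  · simp [Nat.choose_eq_zero_of_lt h, h.ne]
  · simp
  · simp [h.ne', Nat.sub_ne_zero_of_lt h]

lemma card_filter_eq_sum_neg_one_pow_mul_choose {ι : Type*} (s : Finset ι) (r : ι → ℕ) {n : ℕ}
    (k : ℕ) (hr : ∀ a ∈ s, r a ≤ n) :
    (#{a ∈ s | r a = k} : ℤ) = ∑ i ∈ range (n - k + 1),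
      (-1) ^ i * (k + i).choose k * ∑ a ∈ s, ((r a).choose (k + i) : ℤ) := by
  simp_rw [mul_sum]
  rw [sum_comm, sum_congr rfl fun a ha ↦ sum_neg_one_pow_mul_choose_mul_choose (hr a ha),
    sum_boole]

lemma sum_choose_card_eq_sum_card_filter_subset {ι α : Type*} [Fintype α] [DecidableEq α]
    (s : Finset ι) (t : ι → Finset α) (j : ℕ) :
    ∑ a ∈ s, (#(t a)).choose j = ∑ S ∈ powersetCard j univ, #{a ∈ s | S ⊆ t a} := by
  simp_rw [card_filter]
  rw [sum_comm]
  refine sum_congr rfl fun a _ ↦ ?_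
  rw [← card_filter, ← card_powersetCard]
  congr 1
  ext S
  simp [mem_powersetCard, and_comm]

end Combinatorics

section MonicPolynomials

variable {R : Type*} [CommRing R] [Nontrivial R]

/-- Monic polynomials of degree `n` correspond to their `n` lower coefficients. -/
noncomputable def monicEquivFin (n : ℕ) : {f : R[X] // IsMonicOfDegree f n} ≃ (Fin n → R) :=
  (Equiv.subtypeEquivRight fun f ↦ (isMonicOfDegree_iff' f n).trans and_comm).trans
    ((monicEquivDegreeLT n).trans (degreeLTEquiv R n).toEquiv)

lemma coe_monicEquivFin_symm {n : ℕ} (a : Fin n → R) :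
    ((monicEquivFin n).symm a : R[X]) = X ^ n + ∑ i : Fin n, monomial i (a i) := rfl

lemma eval_monicEquivFin_symm {n : ℕ} (a : Fin n → R) (x : R) :
    ((monicEquivFin n).symm a : R[X]).eval x = x ^ n + ∑ i : Fin n, a i * x ^ (i : ℕ) := by
  simp [coe_monicEquivFin_symm, eval_finsetSum]

lemma coeff_monicEquivFin_symm {n : ℕ} (a : Fin n → R) (i : Fin n) :
    ((monicEquivFin n).symm a : R[X]).coeff i = a i := by
  simp [coe_monicEquivFin_symm, coeff_X_pow, i.isLt.ne, coeff_monomial, Fin.val_inj]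

variable [Fintype R]

variable (R) in
/-- The finite set of monic polynomials of degree `n` over a finite ring. -/
noncomputable def monicsOfDegree (n : ℕ) : Finset R[X] :=
  univ.map ((monicEquivFin n).symm.toEmbedding.trans (Function.Embedding.subtype _))

lemma mem_monicsOfDegree {n : ℕ} {f : R[X]} : f ∈ monicsOfDegree R n ↔ IsMonicOfDegree f n := by
  simp only [monicsOfDegree, mem_map, mem_univ, true_and]
  exact ⟨fun ⟨a, ha⟩ ↦ ha ▸ ((monicEquivFin n).symm a).2,
    fun hf ↦ ⟨monicEquivFin n ⟨f, hf⟩, by simp⟩⟩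

lemma card_monicsOfDegree (n : ℕ) : #(monicsOfDegree R n) = Fintype.card R ^ n := by
  simp [monicsOfDegree]

lemma card_filter_dvd_monicsOfDegree {g : R[X]} {d n : ℕ}
    [DecidablePred (g ∣ ·)] (hg : IsMonicOfDegree g d) (hd : d ≤ n) :
    #{f ∈ monicsOfDegree R n | g ∣ f} = Fintype.card R ^ (n - d) := by
  rw [← card_monicsOfDegree, eq_comm]
  refine card_bij (fun h _ ↦ g * h) ?_ (fun _ _ _ _ h ↦ hg.monic.isRegular.left h) ?_
  · intro h hh
    have := hg.mul (mem_monicsOfDegree.1 hh)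
    rw [Nat.add_sub_cancel' hd] at this
    simpa [mem_monicsOfDegree] using this
  · simp only [mem_filter, mem_monicsOfDegree]
    rintro _ ⟨hf, h, rfl⟩
    rw [← Nat.add_sub_cancel' hd] at hf
    exact ⟨h, hg.of_mul_left hf, rfl⟩

lemma card_filter_coeff_eq_monicsOfDegree_succ {m : ℕ} (c : R) (P : R[X] → Prop) [DecidablePred P]
    [DecidableEq R] :
    #{f ∈ monicsOfDegree R (m + 1) | f.coeff m = c ∧ P f}
      = #{a : Fin m → R | P ((monicEquivFin (m + 1)).symm (Fin.snoc a c))} := by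
  have coeff_last (v : Fin (m + 1) → R) :
      ((monicEquivFin (m + 1)).symm v : R[X]).coeff m = v (Fin.last m) :=
    coeff_monicEquivFin_symm v (Fin.last m)
  symm
  refine card_bij (fun a _ ↦ ((monicEquivFin (m + 1)).symm (Fin.snoc a c) : R[X])) ?_ ?_ ?_
  · intro a ha
    simpa [mem_monicsOfDegree, coeff_last, ((monicEquivFin (m + 1)).symm _).property] using ha
  · intro a _ a' _ h
    simpa [Subtype.val_inj, Fin.snoc_inj] using h
  · intro f hf
    obtain ⟨hmonic, rfl, hP⟩ := by simpa [mem_monicsOfDegree] using hf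
    obtain ⟨v, hv⟩ := (monicEquivFin (m + 1)).symm.surjective ⟨f, hmonic⟩
    obtain rfl : ((monicEquivFin (m + 1)).symm v : R[X]) = f := congrArg Subtype.val hv
    rw [coeff_last]
    exact ⟨Fin.init v, by simpa using hP, by simp⟩

end MonicPolynomials

section Translation

lemma coeff_taylor_of_natDegree_le_succ {R : Type*} [CommSemiring R] {f : R[X]} {m : ℕ}
    (hf : f.natDegree ≤ m + 1) (t : R) :
    (taylor t f).coeff m = f.coeff m + (m + 1) * f.coeff (m + 1) * t := by
  have hdeg : (hasseDeriv m f).natDegree ≤ 1 :=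
    (natDegree_hasseDeriv_le f m).trans (by omega)
  rw [taylor_coeff, eq_X_add_C_of_natDegree_le_one hdeg]
  simp [hasseDeriv_coeff, add_comm]

lemma isMonicOfDegree_taylor_iff {R : Type*} [CommRing R] {f : R[X]} {n : ℕ} (t : R) :
    IsMonicOfDegree (taylor t f) n ↔ IsMonicOfDegree f n := by
  simp only [isMonicOfDegree_iff', natDegree_taylor, Monic, leadingCoeff_taylor]

lemma card_toFinset_roots_taylor {R : Type*} [CommRing R] [IsDomain R] [DecidableEq R]
    (f : R[X]) (t : R) : #(taylor t f).roots.toFinset = #f.roots.toFinset :=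
  card_equiv (Equiv.addRight t) fun x ↦ by simp [taylor_eval]

variable {R : Type*} [CommRing R] [Nontrivial R] [Fintype R] [DecidableEq R]

lemma card_filter_coeff_eq_add_mul_monicsOfDegree_succ (m : ℕ) (c t : R) (P : R[X] → Prop)
    [DecidablePred P] (hP : ∀ f, P (taylor t f) ↔ P f) :
    #{f ∈ monicsOfDegree R (m + 1) | f.coeff m = c + (m + 1) * t ∧ P f}
      = #{f ∈ monicsOfDegree R (m + 1) | f.coeff m = c ∧ P f} := by
  symm
  refine card_equiv (taylorEquiv t).toEquiv fun f ↦ ?_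
  change _ ↔ taylor t f ∈ _
  simp only [mem_filter, mem_monicsOfDegree, isMonicOfDegree_taylor_iff, hP]
  refine and_congr_right fun hf ↦ ?_
  have htop : f.coeff (m + 1) = 1 := ((isMonicOfDegree_iff f _).1 hf).2
  rw [coeff_taylor_of_natDegree_le_succ hf.natDegree_eq.le, htop, mul_one, add_left_inj]

lemma card_mul_card_filter_coeff_eq_monicsOfDegree_succ {m : ℕ} (hm : IsUnit ((m + 1 : ℕ) : R))
    (c : R) (P : R[X] → Prop) [DecidablePred P] (hP : ∀ t f, P (taylor t f) ↔ P f) :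
    Fintype.card R * #{f ∈ monicsOfDegree R (m + 1) | f.coeff m = c ∧ P f}
      = #{f ∈ monicsOfDegree R (m + 1) | P f} := by
  have equidistributed (c' : R) :
      #{f ∈ {f ∈ monicsOfDegree R (m + 1) | P f} | f.coeff m = c'}
        = #{f ∈ monicsOfDegree R (m + 1) | f.coeff m = c ∧ P f} := by
    obtain ⟨t, ht⟩ := hm.dvd (a := c' - c)
    rw [Nat.cast_succ, sub_eq_iff_eq_add'] at ht
    rw [filter_comm, filter_filter, ht,
      card_filter_coeff_eq_add_mul_monicsOfDegree_succ m c t P (hP t)]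
  symm
  rw [card_eq_sum_card_fiberwise (f := fun f ↦ f.coeff m) (t := univ) fun _ _ ↦ by simp,
    sum_congr rfl fun c' _ ↦ equidistributed c']
  simp

end Translation

section FiniteField

variable {F : Type*} [Field F] [Fintype F] [DecidableEq F]

lemma card_filter_subset_roots_monicsOfDegree {n : ℕ} {S : Finset F} (hS : #S ≤ n) :
    #{f ∈ monicsOfDegree F n | S ⊆ f.roots.toFinset} = Fintype.card F ^ (n - #S) := by
  classical
  have hprod : IsMonicOfDegree (∏ s ∈ S, (X - C s)) #S :=
    ⟨by simp, monic_prod_X_sub_C id S⟩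
  rw [← card_filter_dvd_monicsOfDegree hprod hS]
  refine congrArg card (filter_congr fun f hf ↦ ?_)
  have hf0 : f ≠ 0 := (mem_monicsOfDegree.1 hf).ne_zero
  rw [← val_le_iff, Multiset.toFinset_val, Multiset.le_dedup, and_iff_left S.nodup,
    ← Multiset.prod_X_sub_C_dvd_iff_le_roots hf0]
  rfl

lemma sum_choose_card_roots_monicsOfDegree {n j : ℕ} (hj : j ≤ n) :
    ∑ f ∈ monicsOfDegree F n, (#f.roots.toFinset).choose j
      = (Fintype.card F).choose j * Fintype.card F ^ (n - j) := by
  have hcard : ∀ S ∈ powersetCard j (univ : Finset F),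
      #{f ∈ monicsOfDegree F n | S ⊆ f.roots.toFinset} = Fintype.card F ^ (n - j) := by
    intro S hS
    obtain rfl := (mem_powersetCard.1 hS).2
    exact card_filter_subset_roots_monicsOfDegree hj
  rw [sum_choose_card_eq_sum_card_filter_subset, sum_congr rfl hcard]
  simp

lemma card_filter_card_roots_eq_monicsOfDegree {n k : ℕ} (hk : k ≤ n) :
    (#{f ∈ monicsOfDegree F n | #f.roots.toFinset = k} : ℤ)
      = (Fintype.card F).choose k * ∑ i ∈ range (n - k + 1),
          (-1) ^ i * (Fintype.card F - k).choose i * (Fintype.card F : ℤ) ^ (n - k - i) := by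
  have hroots : ∀ f ∈ monicsOfDegree F n, #f.roots.toFinset ≤ n := fun f hf ↦
    (Multiset.toFinset_card_le _).trans
      ((card_roots' f).trans_eq (mem_monicsOfDegree.1 hf).natDegree_eq)
  rw [card_filter_eq_sum_neg_one_pow_mul_choose _ _ k hroots, mul_sum]
  refine sum_congr rfl fun i hi ↦ ?_
  have hki : k + i ≤ n := by have := mem_range.1 hi; omega
  have hmoment := sum_choose_card_roots_monicsOfDegree (F := F) hki
  have htrinomial := Nat.choose_mul (n := Fintype.card F) (Nat.le_add_right k i)
  rw [Nat.add_sub_cancel_left] at htrinomial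
  rw [Nat.sub_add_eq] at hmoment
  zify at hmoment htrinomial
  rw [hmoment]
  linear_combination (-1 : ℤ) ^ i * (Fintype.card F : ℤ) ^ (n - k - i) * htrinomial

lemma natCard_subtype_natCard_roots_eq (m k : ℕ) (b : F) :
    Nat.card {a : Fin m → F //
        Nat.card {α : F // α ^ (m + 1) - b * α ^ m + ∑ i : Fin m, a i * α ^ (i : ℕ) = 0} = k}
      = #{f ∈ monicsOfDegree F (m + 1) | f.coeff m = -b ∧ #f.roots.toFinset = k} := by
  have card_roots (a : Fin m → F) :
      #((monicEquivFin (m + 1)).symm (Fin.snoc a (-b)) : F[X]).roots.toFinset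
        = Nat.card {α : F // α ^ (m + 1) - b * α ^ m + ∑ i : Fin m, a i * α ^ (i : ℕ) = 0} := by
    rw [Nat.card_eq_fintype_card, Fintype.card_subtype]
    congr 1
    ext x
    rw [Multiset.mem_toFinset, mem_roots ((monicEquivFin (m + 1)).symm _).2.ne_zero, IsRoot,
      eval_monicEquivFin_symm, Fin.sum_univ_castSucc]
    simp only [Fin.snoc_castSucc, Fin.snoc_last, Fin.val_castSucc, Fin.val_last, mem_filter_univ]
    ring_nf
  rw [card_filter_coeff_eq_monicsOfDegree_succ, Nat.card_eq_fintype_card, Fintype.card_subtype]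
  simp_rw [card_roots]

end FiniteField

theorem stmt_4_general {F : Type*} [Field F] [Fintype F] {n k : ℕ} (hn : (n : F) ≠ 0) (b : F)
    (hk : k ≤ n) :
    (Nat.card {a : Fin (n - 1) → F //
        Nat.card {α : F //
          α ^ n - b * α ^ (n - 1) + ∑ i : Fin (n - 1), a i * α ^ (i : ℕ) = 0} = k} : ℚ)
      = (Fintype.card F : ℚ) ^ ((n : ℤ) - k - 1) * ((Fintype.card F).choose k) *
        ∑ i ∈ Finset.range (n - k + 1),
          (-1 : ℚ) ^ i * ((Fintype.card F - k).choose i) * (Fintype.card F : ℚ) ^ (-(i : ℤ)) := by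
  classical
  obtain ⟨m, rfl⟩ := Nat.exists_eq_succ_of_ne_zero fun h : n = 0 ↦ hn (by simp [h])
  refine (congrArg Nat.cast (natCard_subtype_natCard_roots_eq m k b)).trans ?_
  have hq : (Fintype.card F : ℚ) ≠ 0 := by exact_mod_cast Fintype.card_ne_zero
  have hcount := card_filter_card_roots_eq_monicsOfDegree (F := F) hk
  rw [← card_mul_card_filter_coeff_eq_monicsOfDegree_succ hn.isUnit (-b) _
    fun t f ↦ by rw [card_toFinset_roots_taylor]] at hcount
  replace hcount := congrArg (Int.cast : ℤ → ℚ) hcount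
  push_cast at hcount
  refine mul_left_cancel₀ hq (hcount.trans ?_)
  rw [mul_sum, mul_sum, mul_sum]
  refine sum_congr rfl fun i hi ↦ ?_
  have hpow : (Fintype.card F : ℚ) ^ (m + 1 - k - i)
      = Fintype.card F * (Fintype.card F : ℚ) ^ (((m + 1 : ℕ) : ℤ) - k - 1)
        * (Fintype.card F : ℚ) ^ (-(i : ℤ)) := by
    have hi' := mem_range.1 hi
    rw [← zpow_one_add₀ hq, ← zpow_add₀ hq, ← zpow_natCast]
    congr 1
    omega
  rw [hpow]
  ring

theorem stmt_4 (p e q n k : ℕ) (hp : p.Prime) (he : 0 < e) (hq : q = p ^ e)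
    (F : Type*) [Field F] [Fintype F] (hF : Fintype.card F = q) (hchar : CharP F p)
    (hn2 : 2 ≤ n) (hnq : n < q) (hpn : ¬ p ∣ n) (b : F) (hk : k ≤ n) :
    (Nat.card {a : Fin (n - 1) → F //
        Nat.card {α : F //
          α ^ n - b * α ^ (n - 1) + ∑ i : Fin (n - 1), a i * α ^ (i : ℕ) = 0} = k} : ℚ)
      = (q : ℚ) ^ ((n : ℤ) - k - 1) * (q.choose k) *
        ∑ i ∈ Finset.range (n - k + 1),
          (-1 : ℚ) ^ i * ((q - k).choose i) * (q : ℚ) ^ (-(i : ℤ)) := by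
  subst hF
  exact stmt_4_general (by rwa [Ne, CharP.cast_eq_zero_iff F p]) b hk
end

section
/- Let F_q be a finite field of odd order, n ≥ 2 even, a_1,...,a_n ∈ F_q^*, b_1,...,b_n ∈ F_q not all zero, a_0, b_0 ∈ F_q. Set a = a_1···a_n, b = Σ b_i^2 a_i^{-1}, c = b_0^2 - a_0 b. If b ≠ 0 and c ≠ 0, then the number of common solutions in F_q^n of the system a_1 x_1^2 + ... + a_n x_n^2 = a_0, b_1 x_1 + ... + b_n x_n = b_0 equals q^{n-2} + q^{(n-2)/2} * χ((-1)^{n/2} a c), where χ is the quadratic character of F_q. -/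
open scoped Classical in
/-- The quadratic character of a finite field. -/
noncomputable def quadChar (F : Type*) [Field F] (x : F) : ℤ :=
  if x = 0 then 0 else if IsSquare x then 1 else -1

/-!
Fix a primitive additive character `ψ` of `F`. By orthogonality, `q ^ 2` times the number of
solutions is the sum over `(s, t)` of the exponential sums
`∑ x, ψ (s * (∑ i, a i * x i ^ 2 - a₀) + t * (∑ i, b i * x i - b₀))`. The terms with `s = 0` add up
to `q ^ n`. For `s ≠ 0` the sum over `x` splits into `n` one-variable quadratic sums, each
a Gauss sum after completing the square; the result is the exponential of a quadratic polynomial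
in `t` with leading coefficient `-B / (4 * s)`, `B = ∑ i, b i ^ 2 / a i`, so the sum over `t`
contributes one more Gauss sum, and the remaining sum over `s` a last one. For even `n` these
`n + 2` Gauss sums multiply to `(χ (-1) * q) ^ ((n + 2) / 2)`.
-/

open Finset

theorem quadChar_eq_quadraticChar {F : Type*} [Field F] [Fintype F] [DecidableEq F] (x : F) :
    quadChar F x = quadraticChar F x := by
  rw [quadraticChar_apply, quadChar, quadraticCharFun]
  congr

section GaussSum

variable {F R : Type*} [Field F] [Fintype F] [CommRing R] {χ : MulChar F R}

theorem gaussSum_mulShift_of_ne_zero (hχ : χ.IsQuadratic) (ψ : AddChar F R) {a : F} (ha : a ≠ 0) :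
    gaussSum χ (ψ.mulShift a) = χ a * gaussSum χ ψ := by
  simpa only [hχ.inv, Units.val_mk0] using gaussSum_mulShift_eq χ ψ (Units.mk0 a ha)

theorem gaussSum_mulShift_of_ne_one [IsDomain R] (hχ : χ.IsQuadratic) (hχ₁ : χ ≠ 1)
    (ψ : AddChar F R) (a : F) :
    gaussSum χ (ψ.mulShift a) = χ a * gaussSum χ ψ := by
  rcases eq_or_ne a 0 with rfl | ha
  · rw [AddChar.mulShift_zero, gaussSum_one_right hχ₁, MulChar.map_zero, zero_mul]
  · exact gaussSum_mulShift_of_ne_zero hχ ψ ha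

end GaussSum

section Orthogonality

variable {S R X : Type*} [CommRing S] [Fintype S] [CommRing R] [IsDomain R] [Fintype X]
  {ψ : AddChar S R}

theorem sum_sum_addChar_mul_add_mul [DecidableEq S] (hψ : ψ.IsPrimitive) (y z : S) :
    ∑ s, ∑ t, ψ (s * y + t * z) = if y = 0 ∧ z = 0 then (Fintype.card S : R) ^ 2 else 0 := by
  simp_rw [AddChar.map_add_eq_mul, ← mul_sum, ← sum_mul]
  rw [AddChar.sum_mulShift y hψ, AddChar.sum_mulShift z hψ]
  split_ifs <;> simp_all [sq]

theorem sum_sum_sum_addChar_eq_card_mul (hψ : ψ.IsPrimitive) (f g : X → S) (u v : S) :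
    ∑ s, ∑ t, ∑ x, ψ (s * (f x - u) + t * (g x - v))
      = (Nat.card {x // f x = u ∧ g x = v} : R) * (Fintype.card S : R) ^ 2 := by
  classical
  calc ∑ s, ∑ t, ∑ x, ψ (s * (f x - u) + t * (g x - v))
      = ∑ x, ∑ s, ∑ t, ψ (s * (f x - u) + t * (g x - v)) := by
        simp_rw [sum_comm (s := (univ : Finset S)) (t := (univ : Finset X))]
    _ = ∑ x, if f x = u ∧ g x = v then (Fintype.card S : R) ^ 2 else 0 := by
        simp_rw [sum_sum_addChar_mul_add_mul hψ, sub_eq_zero]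
    _ = (Nat.card {x // f x = u ∧ g x = v} : R) * (Fintype.card S : R) ^ 2 := by
        rw [← sum_filter, sum_const, nsmul_eq_mul, Nat.card_eq_fintype_card, Fintype.card_subtype]

end Orthogonality

section Product

variable {ι : Type*}

theorem addChar_sum_eq_prod {A M : Type*} [AddCommMonoid A] [CommMonoid M] (ψ : AddChar A M)
    (s : Finset ι) (f : ι → A) : ψ (∑ i ∈ s, f i) = ∏ i ∈ s, ψ (f i) :=
  map_prod ψ.toMonoidHom (fun i ↦ Multiplicative.ofAdd (f i)) s

variable [Fintype ι] [DecidableEq ι]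

theorem sum_addChar_sum_eq_prod_sum {A R X : Type*} [AddCommMonoid A] [CommSemiring R] [Fintype X]
    (ψ : AddChar A R) (f : ι → X → A) : ∑ x : ι → X, ψ (∑ i, f i (x i)) = ∏ i, ∑ y, ψ (f i y) := by
  simp_rw [addChar_sum_eq_prod, Fintype.prod_sum]

theorem sum_addChar_linear_eq_zero {S R : Type*} [CommRing S] [Fintype S] [CommRing R] [IsDomain R]
    {ψ : AddChar S R} (hψ : ψ.IsPrimitive) {b : ι → S} (hb : b ≠ 0) :
    ∑ x : ι → S, ψ (∑ i, b i * x i) = 0 := by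
  classical
  obtain ⟨i, hi⟩ := Function.ne_iff.mp hb
  rw [sum_addChar_sum_eq_prod_sum ψ fun i y ↦ b i * y]
  refine prod_eq_zero (mem_univ i) ?_
  simpa [mul_comm, show b i ≠ 0 from hi] using AddChar.sum_mulShift (b i) hψ

end Product

section QuadraticCharIn

variable {F R : Type*} [Field F] [Fintype F] [DecidableEq F] [CommRing R]

variable (F R) in
/-- The quadratic character of `F` with values in the ring `R`, so that it can be multiplied with
`R`-valued additive characters. -/
abbrev quadraticCharIn : MulChar F R :=
  (quadraticChar F).ringHomComp (Int.castRingHom R)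

theorem quadraticCharIn_apply (x : F) : quadraticCharIn F R x = (quadraticChar F x : R) := rfl

theorem quadraticCharIn_isQuadratic : (quadraticCharIn F R).IsQuadratic :=
  (quadraticChar_isQuadratic F).comp _

theorem quadraticCharIn_ne_one [CharZero R] (hF : ringChar F ≠ 2) : quadraticCharIn F R ≠ 1 :=
  (MulChar.ringHomComp_ne_one_iff (RingHom.injective_int _)).mpr (quadraticChar_ne_one hF)

theorem quadraticCharIn_sq {x : F} (hx : x ≠ 0) : quadraticCharIn F R x ^ 2 = 1 := by
  rw [quadraticCharIn_apply]
  exact_mod_cast congrArg (Int.cast : ℤ → R) (quadraticChar_sq_one hx)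

theorem quadraticCharIn_mul_sq (x : F) {y : F} (hy : y ≠ 0) :
    quadraticCharIn F R (x * y ^ 2) = quadraticCharIn F R x := by
  rw [map_mul, map_pow, quadraticCharIn_sq hy, mul_one]

theorem sum_comp_sq (hF : ringChar F ≠ 2) (f : F → R) :
    ∑ x, f (x ^ 2) = ∑ y, f y + ∑ y, quadraticCharIn F R y * f y := by
  have card_sqrts (y : F) : (#{x : F | x ^ 2 = y} : R) = quadraticCharIn F R y + 1 := by
    have card_sqrts_int := quadraticChar_card_sqrts hF y
    simp only [Set.toFinset_ofPred] at card_sqrts_int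
    rw [quadraticCharIn_apply]
    exact_mod_cast congrArg (Int.cast : ℤ → R) card_sqrts_int
  calc ∑ x, f (x ^ 2)
      = ∑ y, ∑ x with x ^ 2 = y, f y := (sum_fiberwise' univ (· ^ 2) f).symm
    _ = ∑ y, (f y + quadraticCharIn F R y * f y) := by
        refine sum_congr rfl fun y _ ↦ ?_
        rw [sum_const, nsmul_eq_mul, card_sqrts]
        ring
    _ = ∑ y, f y + ∑ y, quadraticCharIn F R y * f y := sum_add_distrib

variable [IsDomain R] {ψ : AddChar F R}

theorem sum_addChar_mul_sq (hF : ringChar F ≠ 2) (hψ : ψ.IsPrimitive) {a : F} (ha : a ≠ 0) :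
    ∑ x, ψ (a * x ^ 2) = quadraticCharIn F R a * gaussSum (quadraticCharIn F R) ψ := by
  have sum_eq_zero : ∑ y, ψ (a * y) = 0 := by
    simpa [mul_comm, ha] using AddChar.sum_mulShift a hψ
  rw [sum_comp_sq hF fun y ↦ ψ (a * y), sum_eq_zero, zero_add,
    ← gaussSum_mulShift_of_ne_zero quadraticCharIn_isQuadratic ψ ha]
  rfl

theorem sum_addChar_quadratic (hF : ringChar F ≠ 2) (hψ : ψ.IsPrimitive) {a : F} (ha : a ≠ 0)
    (b : F) :
    ∑ x, ψ (a * x ^ 2 + b * x)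
      = quadraticCharIn F R a * gaussSum (quadraticCharIn F R) ψ * ψ (-(b ^ 2 / (4 * a))) := by
  have two_ne : (2 : F) ≠ 0 := Ring.two_ne_zero hF
  have complete_square (x : F) :
      a * x ^ 2 + b * x = a * (x + b / (2 * a)) ^ 2 + -(b ^ 2 / (4 * a)) := by
    rw [show (4 : F) = 2 * 2 by norm_num]
    field_simp
    ring
  simp_rw [complete_square, AddChar.map_add_eq_mul, ← sum_mul]
  rw [← sum_addChar_mul_sq hF hψ ha,
    ← Equiv.sum_comp (Equiv.addRight (b / (2 * a))) fun x ↦ ψ (a * x ^ 2)]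
  rfl

theorem sum_addChar_diagonal_quadratic {ι : Type*} [Fintype ι] [DecidableEq ι]
    (hF : ringChar F ≠ 2) (hψ : ψ.IsPrimitive) {a : ι → F} (ha : ∀ i, a i ≠ 0) (b : ι → F) :
    ∑ x : ι → F, ψ (∑ i, (a i * x i ^ 2 + b i * x i))
      = quadraticCharIn F R (∏ i, a i) * gaussSum (quadraticCharIn F R) ψ ^ Fintype.card ι
        * ψ (-∑ i, b i ^ 2 / (4 * a i)) := by
  rw [sum_addChar_sum_eq_prod_sum ψ fun i y ↦ a i * y ^ 2 + b i * y]
  simp_rw [sum_addChar_quadratic hF hψ (ha _), prod_mul_distrib]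
  rw [prod_const, card_univ, map_prod, ← addChar_sum_eq_prod, sum_neg_distrib]

end QuadraticCharIn

section PencilSum

variable {F R ι : Type*} [Field F] [Fintype F] [CommRing R] [Fintype ι] [DecidableEq ι]

/-- The exponential sum over `x : ι → F` attached to the member with parameters `(s, t)` of the
pencil spanned by the quadric `∑ i, a i * x i ^ 2 = a₀` and the hyperplane `∑ i, b i * x i = b₀`.
Summed over `s` and `t` it is `q ^ 2` times the number of common points of the two. -/
def pencilSum (ψ : AddChar F R) (a b : ι → F) (a₀ b₀ s t : F) : R :=
  ∑ x : ι → F, ψ (s * (∑ i, a i * x i ^ 2 - a₀) + t * (∑ i, b i * x i - b₀))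

variable [IsDomain R] {ψ : AddChar F R}

theorem sum_pencilSum_zero (hψ : ψ.IsPrimitive) (a : ι → F) {b : ι → F} (hb : b ≠ 0) (a₀ b₀ : F) :
    ∑ t, pencilSum ψ a b a₀ b₀ 0 t = (Fintype.card F : R) ^ Fintype.card ι := by
  have vanish (t : F) (ht : t ≠ 0) : pencilSum ψ a b a₀ b₀ 0 t = 0 := by
    have linear (x : ι → F) : 0 * (∑ i, a i * x i ^ 2 - a₀) + t * (∑ i, b i * x i - b₀)
        = ∑ i, (t • b) i * x i + -(t * b₀) := by
      simp only [Pi.smul_apply, smul_eq_mul, mul_assoc, ← mul_sum]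
      ring
    simp_rw [pencilSum, linear, AddChar.map_add_eq_mul, ← sum_mul]
    rw [sum_addChar_linear_eq_zero hψ (smul_ne_zero ht hb), zero_mul]
  rw [Fintype.sum_eq_single 0 vanish]
  simp [pencilSum]

variable [DecidableEq F]

theorem pencilSum_of_ne_zero (hF : ringChar F ≠ 2) (hψ : ψ.IsPrimitive) {a : ι → F}
    (ha : ∀ i, a i ≠ 0) (b : ι → F) (a₀ b₀ : F) {s : F} (hs : s ≠ 0) (t : F) :
    pencilSum ψ a b a₀ b₀ s t
      = quadraticCharIn F R s ^ Fintype.card ι * quadraticCharIn F R (∏ i, a i)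
        * gaussSum (quadraticCharIn F R) ψ ^ Fintype.card ι * ψ (-(s * a₀))
        * ψ (-(∑ i, b i ^ 2 * (a i)⁻¹) / (4 * s) * t ^ 2 + -b₀ * t) := by
  have diagonal (x : ι → F) : s * (∑ i, a i * x i ^ 2 - a₀) + t * (∑ i, b i * x i - b₀)
      = ∑ i, (s * a i * x i ^ 2 + t * b i * x i) + (-(s * a₀) + -b₀ * t) := by
    simp only [sum_add_distrib, mul_assoc, ← mul_sum]
    ring
  have shift : -∑ i, (t * b i) ^ 2 / (4 * (s * a i))
      = -(∑ i, b i ^ 2 * (a i)⁻¹) / (4 * s) * t ^ 2 := by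
    rw [neg_div, neg_mul, sum_div, sum_mul]
    exact congrArg _ (sum_congr rfl fun i _ ↦ by ring)
  simp_rw [pencilSum, diagonal, AddChar.map_add_eq_mul, ← sum_mul]
  rw [sum_addChar_diagonal_quadratic hF hψ fun i ↦ mul_ne_zero hs (ha i), prod_mul_distrib,
    prod_const, card_univ, map_mul, map_pow, shift]
  ring

theorem sum_pencilSum_of_ne_zero (hF : ringChar F ≠ 2) (hψ : ψ.IsPrimitive) {a b : ι → F}
    (ha : ∀ i, a i ≠ 0) {B : F} (hB : ∑ i, b i ^ 2 * (a i)⁻¹ = B) (hB₀ : B ≠ 0)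
    (a₀ b₀ : F) {s : F} (hs : s ≠ 0) :
    ∑ t, pencilSum ψ a b a₀ b₀ s t
      = quadraticCharIn F R ((∏ i, a i) * -B)
        * gaussSum (quadraticCharIn F R) ψ ^ (Fintype.card ι + 1)
        * (quadraticCharIn F R s ^ (Fintype.card ι + 1) * ψ ((b₀ ^ 2 - a₀ * B) / B * s)) := by
  have two_ne : (2 : F) ≠ 0 := Ring.two_ne_zero hF
  have four_eq : (4 : F) = 2 * 2 := by norm_num
  have leading_ne_zero : -B / (4 * s) ≠ 0 := by
    simp [four_eq, two_ne, hB₀, hs]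
  have char_leading : quadraticCharIn F R (-B / (4 * s))
      = quadraticCharIn F R (-B) * quadraticCharIn F R s := by
    rw [← map_mul, ← quadraticCharIn_mul_sq (-B / (4 * s)) (mul_ne_zero two_ne hs), four_eq]
    congr 1
    field_simp
  have exponent : -(s * a₀) + -((-b₀) ^ 2 / (4 * (-B / (4 * s)))) = (b₀ ^ 2 - a₀ * B) / B * s := by
    rw [four_eq]
    field_simp
    ring
  simp_rw [pencilSum_of_ne_zero hF hψ ha b a₀ b₀ hs, hB, ← mul_sum]
  rw [sum_addChar_quadratic hF hψ leading_ne_zero, char_leading, ← exponent,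
    AddChar.map_add_eq_mul, map_mul]
  ring

theorem sum_sum_pencilSum_of_even [CharZero R] (hF : ringChar F ≠ 2) (hψ : ψ.IsPrimitive)
    {a b : ι → F} (hι : Even (Fintype.card ι)) (ha : ∀ i, a i ≠ 0) {B : F}
    (hB : ∑ i, b i ^ 2 * (a i)⁻¹ = B) (hB₀ : B ≠ 0) (a₀ b₀ : F) :
    ∑ s, ∑ t, pencilSum ψ a b a₀ b₀ s t
      = (Fintype.card F : R) ^ Fintype.card ι
        + quadraticCharIn F R ((∏ i, a i) * -(b₀ ^ 2 - a₀ * B))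
          * gaussSum (quadraticCharIn F R) ψ ^ (Fintype.card ι + 2) := by
  have hb : b ≠ 0 := by
    rintro rfl
    simp [← hB] at hB₀
  have nonzero_part : ∑ s ∈ univ.erase 0, ∑ t, pencilSum ψ a b a₀ b₀ s t
      = ∑ s, quadraticCharIn F R ((∏ i, a i) * -B)
        * gaussSum (quadraticCharIn F R) ψ ^ (Fintype.card ι + 1)
        * (quadraticCharIn F R s * ψ ((b₀ ^ 2 - a₀ * B) / B * s)) := by
    refine (sum_congr rfl fun s hs ↦ ?_).trans (sum_erase _ (by simp))
    have hs₀ : s ≠ 0 := ne_of_mem_erase hs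
    obtain ⟨k, hk⟩ := hι.two_dvd
    rw [sum_pencilSum_of_ne_zero hF hψ ha hB hB₀ a₀ b₀ hs₀, pow_succ (quadraticCharIn F R s), hk,
      pow_mul, quadraticCharIn_sq hs₀, one_pow, one_mul]
  have gaussSum_eq : ∑ s, quadraticCharIn F R s * ψ ((b₀ ^ 2 - a₀ * B) / B * s)
      = quadraticCharIn F R ((b₀ ^ 2 - a₀ * B) / B) * gaussSum (quadraticCharIn F R) ψ :=
    gaussSum_mulShift_of_ne_one quadraticCharIn_isQuadratic (quadraticCharIn_ne_one hF) ψ _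
  have char_arg : (∏ i, a i) * -(b₀ ^ 2 - a₀ * B)
      = (∏ i, a i) * -B * ((b₀ ^ 2 - a₀ * B) / B) := by
    field_simp
  rw [← add_sum_erase _ _ (mem_univ 0), sum_pencilSum_zero hψ a hb, nonzero_part, ← mul_sum,
    gaussSum_eq, char_arg, map_mul _ (_ * -B)]
  ring

end PencilSum

theorem gaussSum_quadraticCharIn_pow {F R : Type*} [Field F] [Fintype F] [DecidableEq F]
    [CommRing R] [IsDomain R] [CharZero R] (hF : ringChar F ≠ 2) {ψ : AddChar F R}
    (hψ : ψ.IsPrimitive) (k : ℕ) :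
    gaussSum (quadraticCharIn F R) ψ ^ (2 * k)
      = quadraticCharIn F R ((-1) ^ k) * (Fintype.card F : R) ^ k := by
  rw [pow_mul, gaussSum_sq (quadraticCharIn_ne_one hF) quadraticCharIn_isQuadratic hψ, mul_pow,
    map_pow]

section Count

variable {F ι : Type*} [Field F] [Fintype F] [Fintype ι] {a b : ι → F}

theorem card_quadric_inter_hyperplane_mul_sq [DecidableEq F] (hF : ringChar F ≠ 2) {k : ℕ}
    (hι : Fintype.card ι = 2 * k) (ha : ∀ i, a i ≠ 0) {B : F}
    (hB : ∑ i, b i ^ 2 * (a i)⁻¹ = B) (hB₀ : B ≠ 0) (a₀ b₀ : F) :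
    (Nat.card {x : ι → F // ∑ i, a i * x i ^ 2 = a₀ ∧ ∑ i, b i * x i = b₀} : ℤ)
        * (Fintype.card F : ℤ) ^ 2
      = (Fintype.card F : ℤ) ^ (2 * k) + (Fintype.card F : ℤ) ^ (k + 1)
          * quadraticChar F ((-1) ^ k * (∏ i, a i) * (b₀ ^ 2 - a₀ * B)) := by
  classical
  obtain ⟨ψ, hψ⟩ : ∃ ψ : AddChar F ℂ, ψ.IsPrimitive :=
    ⟨_, AddChar.FiniteField.primitiveChar_to_Complex_isPrimitive F⟩
  have count := sum_sum_sum_addChar_eq_card_mul hψ (fun x : ι → F ↦ ∑ i, a i * x i ^ 2)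
    (fun x ↦ ∑ i, b i * x i) a₀ b₀
  have pencil := sum_sum_pencilSum_of_even hF hψ (hι ▸ even_two_mul k) ha hB hB₀ a₀ b₀
  have char_arg : (∏ i, a i) * -(b₀ ^ 2 - a₀ * B) * (-1) ^ (k + 1)
      = (-1) ^ k * (∏ i, a i) * (b₀ ^ 2 - a₀ * B) := by
    ring
  rw [hι, show 2 * k + 2 = 2 * (k + 1) by ring, gaussSum_quadraticCharIn_pow hF hψ, ← mul_assoc,
    ← map_mul, char_arg, quadraticCharIn_apply, mul_comm (Int.cast _)] at pencil
  exact_mod_cast count.symm.trans pencil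

theorem stmt_9_general (hq : Odd (Fintype.card F)) (hι : Even (Fintype.card ι))
    (ha : ∀ i, a i ≠ 0) (hB : ∑ i, b i ^ 2 * (a i)⁻¹ ≠ 0) (a₀ b₀ : F) :
    (Nat.card {x : ι → F // ∑ i, a i * x i ^ 2 = a₀ ∧ ∑ i, b i * x i = b₀} : ℤ)
      = (Fintype.card F : ℤ) ^ (Fintype.card ι - 2)
        + (Fintype.card F : ℤ) ^ ((Fintype.card ι - 2) / 2)
          * quadChar F ((-1) ^ (Fintype.card ι / 2) * (∏ i, a i)
              * (b₀ ^ 2 - a₀ * ∑ i, b i ^ 2 * (a i)⁻¹)) := by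
  classical
  have hF : ringChar F ≠ 2 := fun h ↦
    Nat.not_even_iff_odd.mpr hq (Nat.even_iff.mpr (FiniteField.even_card_of_char_two h))
  have hι₀ : 0 < Fintype.card ι := card_pos.mpr (nonempty_of_sum_ne_zero hB)
  obtain ⟨m, hm⟩ : ∃ m, Fintype.card ι = 2 * (m + 1) := by
    obtain ⟨k, hk⟩ := hι
    exact ⟨k - 1, by lia⟩
  have key := card_quadric_inter_hyperplane_mul_sq hF hm ha rfl hB a₀ b₀
  rw [quadChar_eq_quadraticChar, hm, show 2 * (m + 1) - 2 = 2 * m by lia,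
    Nat.mul_div_cancel_left m two_pos, Nat.mul_div_cancel_left (m + 1) two_pos]
  refine mul_right_cancel₀ (pow_ne_zero 2 (Nat.cast_ne_zero.mpr (Fintype.card_ne_zero (α := F)))) ?_
  rw [key]
  ring

end Count

theorem stmt_9 (F : Type*) [Field F] [Fintype F] (hq : Odd (Fintype.card F))
    (n : ℕ) (hn : 2 ≤ n) (hne : Even n)
    (a b : Fin n → F) (ha : ∀ i, a i ≠ 0) (hb : ∃ i, b i ≠ 0) (a0 b0 : F)
    (hB : (∑ i, (b i) ^ 2 * (a i)⁻¹) ≠ 0)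
    (hc : b0 ^ 2 - a0 * (∑ i, (b i) ^ 2 * (a i)⁻¹) ≠ 0) :
    (Nat.card {x : Fin n → F //
        (∑ i, a i * (x i) ^ 2) = a0 ∧ (∑ i, b i * x i) = b0} : ℤ)
      = (Fintype.card F : ℤ) ^ (n - 2)
        + (Fintype.card F : ℤ) ^ ((n - 2) / 2)
          * quadChar F ((-1 : F) ^ (n / 2) * (∏ i, a i)
              * (b0 ^ 2 - a0 * (∑ i, (b i) ^ 2 * (a i)⁻¹))) := by
  simpa only [Fintype.card_fin] using
    stmt_9_general hq ((Fintype.card_fin n).symm ▸ hne) ha hB a0 b0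
end
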